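/- Let c : Ω → [0,∞] be 𝒜-measurable. Then duality holds over finitely additive couplings: inf_{Q ∈ M} Q(c) = sup { Σ_{i=1}^n μ_i(f_i) : f_i ∈ L_1(μ_i) for all i and Σ_{i=1}^n f_i(ω_i) ≤ c(ω) for all ω ∈ Ω }. -/

import Mathlib

open MeasureTheory Set ENNReal

namespace FATransport

variable {α : Type*} [MeasurableSpace α]

/-- The collection of measurable sets of `α` (the σ-field `𝒜`), as a type. -/
abbrev MSet (α : Type*) [MeasurableSpace α] := {A : Set α // MeasurableSet A}

/-- A finitely additive probability on the σ-field of `α`, viewed as an element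
of `[0,1]^𝒜`: it maps the whole space to `1` and is additive on disjoint pairs. -/
def IsFAP (P : MSet α → unitInterval) : Prop :=
  (P ⟨Set.univ, MeasurableSet.univ⟩ : ℝ) = 1 ∧
    ∀ A B : MSet α, Disjoint A.1 B.1 →
      (P ⟨A.1 ∪ B.1, A.2.union B.2⟩ : ℝ) = (P A : ℝ) + (P B : ℝ)

/-- `ℙ`, the set of all finitely additive probabilities on `𝒜`, as a subset of
`[0,1]^𝒜` (with its product topology). -/
def FAPs (α : Type*) [MeasurableSpace α] : Set (MSet α → unitInterval) :=
  {P | IsFAP P}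

/-- Integral of a simple function with respect to a finitely additive set function. -/
noncomputable def simpleInt (P : MSet α → unitInterval) (s : SimpleFunc α ℝ) : ℝ :=
  ∑ y ∈ s.range, y * (P ⟨(⇑s) ⁻¹' {y}, s.measurableSet_fiber y⟩ : ℝ)

/-- `P(f)` for a bounded measurable `f : α → ℝ`: the supremum of the integrals of
simple functions below `f` (for a f.a.p. `P` and bounded measurable `f` this agrees
with the integral defined by uniform approximation by simple functions). -/
noncomputable def fapInt (P : MSet α → unitInterval) (f : α → ℝ) : ℝ :=
  sSup (simpleInt P '' {s : SimpleFunc α ℝ | ∀ x, s x ≤ f x})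

/-- `P(c) = sup_k P(c ∧ k)` for a `[0,∞]`-valued `c`. -/
noncomputable def fapIntTop (P : MSet α → unitInterval) (c : α → ℝ≥0∞) : ℝ≥0∞ :=
  ⨆ k : ℕ, ENNReal.ofReal (fapInt P (fun x => (c x ⊓ (k : ℝ≥0∞)).toReal))

/-- A real-valued `f` is `P`-integrable iff `P(|f|) < ∞`. -/
def FapIntegrable (P : MSet α → unitInterval) (f : α → ℝ) : Prop :=
  fapIntTop P (fun x => ENNReal.ofReal |f x|) < ⊤

/-- `P(f) = P(f⁺) - P(f⁻)` for a (`P`-integrable) real-valued `f`. -/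
noncomputable def fapIntR (P : MSet α → unitInterval) (f : α → ℝ) : ℝ :=
  (fapIntTop P (fun x => ENNReal.ofReal (f x))).toReal -
    (fapIntTop P (fun x => ENNReal.ofReal (-f x))).toReal

/-- `P ≪ Q` for finitely additive probabilities. -/
def FapAC (P Q : MSet α → unitInterval) : Prop :=
  ∀ A : MSet α, (Q A : ℝ) = 0 → (P A : ℝ) = 0

variable {n : ℕ} {Ω : Fin n → Type*} [∀ i, MeasurableSpace (Ω i)]

/-- `M`, the set of finitely additive probabilities on `𝒜 = ⊗ᵢ 𝒜ᵢ` whose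
`i`-th marginal is `μ i` for every `i`. -/
def couplings (μ : ∀ i, Measure (Ω i)) : Set (MSet (∀ i, Ω i) → unitInterval) :=
  {P | IsFAP P ∧ ∀ (i : Fin n) (B : Set (Ω i)) (hB : MeasurableSet B),
    (P ⟨(fun ω => ω i) ⁻¹' B, (measurable_pi_apply i) hB⟩ : ℝ) = (μ i B).toReal}

end FATransport

namespace FATransport

/-!
Weak duality holds because truncating each `fᵢ` to `[-(n + 1) k, k]` keeps `⊕ᵢ fᵢ ≤ c` (where some
`fⱼ` is cut off from below, the truncated sum is nonpositive), and the truncations are approximated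
from below by simple functions, on which a coupling acts through its marginals only.

For the reverse inequality let `D` bound the dual value. The pairs `(g, Σᵢ μᵢ(fᵢ) + s D)` with
`g ≤ ⊕ᵢ fᵢ + s c` and `s ≥ 0` form a cone, and `D` being a dual bound says exactly that a pair
`(0, t)` in this cone has `t ≥ 0`. The M. Riesz extension theorem then yields a linear
functional `φ` on simple functions with `φ g ≤ t` on the whole cone. Taking `s = 0` shows that `φ`
is positive with marginals `μᵢ`, so it is integration against a coupling `Q`; taking `f = 0`,
`s = 1` gives `Q(c) ≤ D`.
-/

open Filter Topology NNReal

section FinitelyAdditiveIntegral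

variable {α β : Type*} [MeasurableSpace α] [MeasurableSpace β] {P : MSet α → unitInterval}

lemma IsFAP.map_empty (hP : IsFAP P) : (P ⟨∅, MeasurableSet.empty⟩ : ℝ) = 0 := by
  simpa using hP.2 ⟨∅, MeasurableSet.empty⟩ ⟨∅, MeasurableSet.empty⟩ (disjoint_empty ∅)

open scoped Classical in
/-- The set function `A ↦ (x ↦ x * P A)`, extended by `0` to non-measurable sets, through which
`simpleInt P` becomes an instance of `SimpleFunc.setToSimpleFunc`. -/
noncomputable def mulRightOfFAP (P : MSet α → unitInterval) (A : Set α) : ℝ →L[ℝ] ℝ :=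
  if hA : MeasurableSet A then (P ⟨A, hA⟩ : ℝ) • ContinuousLinearMap.id ℝ ℝ else 0

lemma mulRightOfFAP_apply (P : MSet α → unitInterval) {A : Set α} (hA : MeasurableSet A) (x : ℝ) :
    mulRightOfFAP P A x = x * P ⟨A, hA⟩ := by
  simp [mulRightOfFAP, hA, mul_comm]

lemma simpleInt_eq_setToSimpleFunc (P : MSet α → unitInterval) (s : SimpleFunc α ℝ) :
    simpleInt P s = s.setToSimpleFunc (mulRightOfFAP P) :=
  Finset.sum_congr rfl fun y _ => (mulRightOfFAP_apply P (s.measurableSet_fiber y) y).symm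

-- For the zero measure `FinMeasAdditive` is plain finite additivity on measurable sets.
lemma IsFAP.finMeasAdditive (hP : IsFAP P) :
    FinMeasAdditive (0 : Measure α) (mulRightOfFAP P) := by
  intro A B hA hB _ _ hAB
  ext
  rw [add_apply, mulRightOfFAP_apply P hA, mulRightOfFAP_apply P hB,
    mulRightOfFAP_apply P (hA.union hB), hP.2 ⟨A, hA⟩ ⟨B, hB⟩ hAB, mul_add]

lemma simpleInt_add (hP : IsFAP P) (s t : SimpleFunc α ℝ) :
    simpleInt P (s + t) = simpleInt P s + simpleInt P t := by
  simp only [simpleInt_eq_setToSimpleFunc]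
  exact SimpleFunc.setToSimpleFunc_add _ hP.finMeasAdditive integrable_zero_measure
    integrable_zero_measure

lemma simpleInt_sum (hP : IsFAP P) {ι : Type*} (S : Finset ι) (s : ι → SimpleFunc α ℝ) :
    simpleInt P (∑ i ∈ S, s i) = ∑ i ∈ S, simpleInt P (s i) :=
  map_sum (AddMonoidHom.mk' (simpleInt P) (simpleInt_add hP)) s S

lemma simpleInt_const (hP : IsFAP P) (x : ℝ) : simpleInt P (SimpleFunc.const α x) = x := by
  have hempty : mulRightOfFAP P ∅ = 0 := by
    ext
    rw [mulRightOfFAP_apply P MeasurableSet.empty, hP.map_empty, mul_zero, zero_apply]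
  rw [simpleInt_eq_setToSimpleFunc, SimpleFunc.setToSimpleFunc_const _ hempty,
    mulRightOfFAP_apply P MeasurableSet.univ, hP.1, mul_one]

lemma simpleInt_mono (hP : IsFAP P) {s t : SimpleFunc α ℝ} (hst : s ≤ t) :
    simpleInt P s ≤ simpleInt P t := by
  simp only [simpleInt_eq_setToSimpleFunc]
  refine SimpleFunc.setToSimpleFunc_mono hP.finMeasAdditive (fun A hA _ x hx => ?_)
    integrable_zero_measure integrable_zero_measure hst
  rw [mulRightOfFAP_apply P hA]
  exact mul_nonneg hx (P _).2.1

lemma simpleInt_comp_eq_integral {μ : Measure β} [IsFiniteMeasure μ] {X : α → β}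
    (hX : Measurable X) (hlaw : ∀ B (hB : MeasurableSet B), (P ⟨X ⁻¹' B, hX hB⟩ : ℝ) = μ.real B)
    (u : SimpleFunc β ℝ) : simpleInt P (u.comp X hX) = ∫ x, u x ∂μ := by
  have hfiber (y : ℝ) : (P ⟨u.comp X hX ⁻¹' {y}, (u.comp X hX).measurableSet_fiber y⟩ : ℝ) =
      μ.real (u ⁻¹' {y}) := hlaw _ (u.measurableSet_fiber y)
  have hnull : ∀ y ∈ u.range, y ∉ (u.comp X hX).range → μ.real (u ⁻¹' {y}) * y = 0 := by
    intro y _ hy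
    have hpre : X ⁻¹' (u ⁻¹' {y}) = X ⁻¹' ∅ := SimpleFunc.preimage_eq_empty_iff _ _ |>.2 hy
    rw [← hlaw _ (u.measurableSet_fiber y)]
    simp only [hpre, hlaw ∅ MeasurableSet.empty, measureReal_empty, zero_mul]
  rw [u.integral_eq_sum u.integrable_of_isFiniteMeasure]
  simp_rw [simpleInt, hfiber, smul_eq_mul, mul_comm _ (μ.real _)]
  exact Finset.sum_subset (SimpleFunc.range_comp_subset_range u hX) hnull

lemma simpleInt_le_fapInt (hP : IsFAP P) {f : α → ℝ} (hf : BddAbove (range f))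
    {s : SimpleFunc α ℝ} (hs : ∀ x, s x ≤ f x) : simpleInt P s ≤ fapInt P f := by
  obtain ⟨K, hK⟩ := hf
  refine le_csSup ⟨K, ?_⟩ ⟨s, hs, rfl⟩
  rintro _ ⟨t, ht, rfl⟩
  calc simpleInt P t ≤ simpleInt P (SimpleFunc.const α K) :=
        simpleInt_mono hP fun x => (ht x).trans (hK (mem_range_self x))
    _ = K := simpleInt_const hP K

lemma ofReal_fapInt_le {f : α → ℝ} {b : ℝ≥0∞}
    (h : ∀ s : SimpleFunc α ℝ, (∀ x, s x ≤ f x) → ENNReal.ofReal (simpleInt P s) ≤ b) :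
    ENNReal.ofReal (fapInt P f) ≤ b := by
  obtain rfl | hb := eq_or_ne b ⊤
  · exact le_top
  simp only [ENNReal.ofReal_le_iff_le_toReal hb] at h ⊢
  exact Real.sSup_le (forall_mem_image.2 h) ENNReal.toReal_nonneg

lemma fapIntTop_eq_iSup (hP : IsFAP P) (c : α → ℝ≥0∞) :
    fapIntTop P c = ⨆ (s : SimpleFunc α ℝ) (_ : ∀ x, ENNReal.ofReal (s x) ≤ c x),
      ENNReal.ofReal (simpleInt P s) := by
  apply le_antisymm
  · refine iSup_le fun k => ofReal_fapInt_le fun s hs => le_iSup₂_of_le s (fun x => ?_) le_rfl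
    exact (ENNReal.ofReal_le_of_le_toReal (hs x)).trans inf_le_left
  · refine iSup₂_le fun s hs => ?_
    obtain ⟨K, hK⟩ := s.exists_forall_le
    obtain ⟨k, hk⟩ := exists_nat_ge K
    refine le_iSup_of_le k (ENNReal.ofReal_le_ofReal (simpleInt_le_fapInt hP ⟨k, ?_⟩ fun x => ?_))
    · rintro _ ⟨x, rfl⟩
      simpa using ENNReal.toReal_mono (natCast_ne_top k) (inf_le_right (a := c x))
    · have hne : c x ⊓ k ≠ ⊤ := (inf_le_right.trans_lt (natCast_lt_top k)).ne
      rw [← ENNReal.ofReal_le_iff_le_toReal hne]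
      exact le_inf (hs x) (ENNReal.ofReal_le_of_le_toReal (by simpa using (hK x).trans hk))

end FinitelyAdditiveIntegral

section PositiveFunctional

variable {α : Type*} [MeasurableSpace α]

lemma simpleFunc_sum_apply {ι : Type*} (S : Finset ι) (s : ι → SimpleFunc α ℝ) (x : α) :
    (∑ i ∈ S, s i) x = ∑ i ∈ S, s i x :=
  map_sum (AddMonoidHom.mk' (fun s : SimpleFunc α ℝ => s x) fun _ _ => rfl) s S

lemma sum_smul_restrict_fiber (s : SimpleFunc α ℝ) :
    ∑ y ∈ s.range, y • (1 : SimpleFunc α ℝ).restrict (s ⁻¹' {y}) = s := by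
  classical
  ext x
  simp only [simpleFunc_sum_apply, SimpleFunc.smul_apply,
    SimpleFunc.restrict_apply _ (s.measurableSet_fiber _), SimpleFunc.coe_one, indicator_apply,
    mem_preimage, mem_singleton_iff, Pi.one_apply, smul_eq_mul, mul_ite, mul_one, mul_zero]
  rw [Finset.sum_ite_eq, if_pos (s.mem_range_self x)]

lemma restrict_one_union {A B : Set α} (hA : MeasurableSet A) (hB : MeasurableSet B)
    (hAB : Disjoint A B) : (1 : SimpleFunc α ℝ).restrict (A ∪ B) =
      (1 : SimpleFunc α ℝ).restrict A + (1 : SimpleFunc α ℝ).restrict B := by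
  apply SimpleFunc.coe_injective
  rw [SimpleFunc.coe_add, SimpleFunc.coe_restrict _ hA, SimpleFunc.coe_restrict _ hB,
    SimpleFunc.coe_restrict _ (hA.union hB), indicator_union_of_disjoint hAB]
  rfl

lemma functional_restrict_one_mem_unitInterval {φ : SimpleFunc α ℝ →ₗ[ℝ] ℝ}
    (hpos : ∀ g, 0 ≤ g → 0 ≤ φ g) (hone : φ 1 = 1) {A : Set α} (hA : MeasurableSet A) :
    φ ((1 : SimpleFunc α ℝ).restrict A) ∈ unitInterval := by
  have hnonneg {B : Set α} (hB : MeasurableSet B) : 0 ≤ φ ((1 : SimpleFunc α ℝ).restrict B) := by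
    refine hpos _ fun x => ?_
    rw [SimpleFunc.restrict_apply _ hB]
    exact indicator_nonneg (fun _ _ => zero_le_one) x
  have hsplit := congrArg φ (restrict_one_union hA hA.compl disjoint_compl_right)
  rw [union_compl_self, SimpleFunc.restrict_univ, hone, map_add] at hsplit
  exact ⟨hnonneg hA, by linarith [hnonneg hA.compl]⟩

/-- The finitely additive probability `A ↦ φ 1_A` defined by a normalized positive linear
functional `φ` on simple functions. -/
noncomputable def fapOfFunctional (φ : SimpleFunc α ℝ →ₗ[ℝ] ℝ) (hpos : ∀ g, 0 ≤ g → 0 ≤ φ g)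
    (hone : φ 1 = 1) : MSet α → unitInterval := fun A =>
  ⟨φ ((1 : SimpleFunc α ℝ).restrict A.1), functional_restrict_one_mem_unitInterval hpos hone A.2⟩

variable {φ : SimpleFunc α ℝ →ₗ[ℝ] ℝ} (hpos : ∀ g, 0 ≤ g → 0 ≤ φ g) (hone : φ 1 = 1)

lemma isFAP_fapOfFunctional : IsFAP (fapOfFunctional φ hpos hone) := by
  refine ⟨?_, fun A B hAB => ?_⟩
  · simpa only [fapOfFunctional, SimpleFunc.restrict_univ] using hone
  · simp only [fapOfFunctional, restrict_one_union A.2 B.2 hAB, map_add]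

lemma simpleInt_fapOfFunctional (s : SimpleFunc α ℝ) :
    simpleInt (fapOfFunctional φ hpos hone) s = φ s := by
  conv_rhs => rw [← sum_smul_restrict_fiber s]
  simp only [map_sum, map_smul, smul_eq_mul]
  rfl

end PositiveFunctional

section Truncation

lemma abs_max_min_le_abs {a b : ℝ} (ha : a ≤ 0) (hb : 0 ≤ b) (y : ℝ) :
    |max a (min y b)| ≤ |y| := by
  rw [abs_le]
  exact ⟨(le_min (neg_abs_le y) ((neg_nonpos.2 (abs_nonneg y)).trans hb)).trans (le_max_right _ _),
    max_le (ha.trans (abs_nonneg y)) ((min_le_left _ _).trans (le_abs_self y))⟩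

lemma tendsto_max_min {a b : ℕ → ℝ} (ha : Tendsto a atTop atBot) (hb : Tendsto b atTop atTop)
    (y : ℝ) : Tendsto (fun k => max (a k) (min y (b k))) atTop (𝓝 y) := by
  refine tendsto_const_nhds.congr' ?_
  filter_upwards [ha.eventually_le_atBot y, hb.eventually_ge_atTop y] with k hak hbk
  rw [min_eq_left hbk, max_eq_right hak]

lemma sum_max_neg_min_le {ι : Type*} [Fintype ι] {k m : ℝ} (hk : 0 ≤ k)
    (hm : Fintype.card ι * k ≤ m) (y : ι → ℝ) :
    ∑ i, max (-m) (min (y i) k) ≤ max 0 (∑ i, y i) := by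
  classical
  have hm0 : 0 ≤ m := le_trans (by positivity) hm
  by_cases hy : ∀ i, -m ≤ y i
  · exact le_max_of_le_right (Finset.sum_le_sum fun i _ => max_le (hy i) (min_le_left _ _))
  · push Not at hy
    obtain ⟨j, hj⟩ := hy
    have hcut : max (-m) (min (y j) k) = -m := max_eq_left ((min_le_left _ _).trans hj.le)
    have hrest : ∑ i ∈ Finset.univ.erase j, max (-m) (min (y i) k) ≤ Fintype.card ι * k := by
      calc ∑ i ∈ Finset.univ.erase j, max (-m) (min (y i) k)
          ≤ ∑ _i ∈ Finset.univ.erase j, k :=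
            Finset.sum_le_sum fun i _ => max_le (by linarith) (min_le_right _ _)
        _ ≤ ∑ _i : ι, k :=
            Finset.sum_le_sum_of_subset_of_nonneg (Finset.erase_subset _ _) fun _ _ _ => hk
        _ = Fintype.card ι * k := by simp
    refine le_max_of_le_left ?_
    rw [← Finset.add_sum_erase _ _ (Finset.mem_univ j), hcut]
    linarith

end Truncation

section SimpleApproximation

variable {α : Type*} [MeasurableSpace α] {f : α → ℝ}

lemma exists_simpleFunc_le_and_le_add (hf : Measurable f) {a b : ℝ} (hab : ∀ x, f x ∈ Icc a b)
    {ε : ℝ} (hε : 0 < ε) :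
    ∃ u : SimpleFunc α ℝ, (∀ x, u x ≤ f x) ∧ ∀ x, f x ≤ u x + ε := by
  have hfin : (range fun x => ⌊f x / ε⌋).Finite := by
    refine (finite_Icc ⌊a / ε⌋ ⌊b / ε⌋).subset ?_
    rintro _ ⟨x, rfl⟩
    exact ⟨Int.floor_le_floor (div_le_div_of_nonneg_right (hab x).1 hε.le),
      Int.floor_le_floor (div_le_div_of_nonneg_right (hab x).2 hε.le)⟩
  let q : SimpleFunc α ℤ :=
    ⟨fun x => ⌊f x / ε⌋, fun _ => (hf.div_const ε).floor (measurableSet_singleton _), hfin⟩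
  refine ⟨q.map fun z : ℤ => (z * ε : ℝ), fun x => ?_, fun x => ?_⟩
  · exact (le_div_iff₀ hε).1 (Int.floor_le (f x / ε))
  · have hlt := (div_le_iff₀ hε).1 (Int.lt_floor_add_one (f x / ε)).le
    rwa [add_one_mul] at hlt

lemma exists_simpleFunc_tendsto_integral {μ : Measure α} [IsFiniteMeasure μ] (hf : Measurable f)
    (hfi : Integrable f μ) {a b : ℕ → ℝ} (ha0 : ∀ k, a k ≤ 0) (hb0 : ∀ k, 0 ≤ b k)
    (ha : Tendsto a atTop atBot) (hb : Tendsto b atTop atTop) :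
    ∃ u : ℕ → SimpleFunc α ℝ, (∀ k x, u k x ≤ max (a k) (min (f x) (b k))) ∧
      Tendsto (fun k => ∫ x, u k x ∂μ) atTop (𝓝 (∫ x, f x ∂μ)) := by
  choose u hu_le hle_u using fun k : ℕ => exists_simpleFunc_le_and_le_add
    (f := fun x => max (a k) (min (f x) (b k))) (measurable_const.max (hf.min measurable_const))
    (fun x => ⟨le_max_left _ _, max_le_max_left (a k) (min_le_right _ _)⟩)
    (Nat.one_div_pos_of_nat (α := ℝ) (n := k))
  refine ⟨u, hu_le, tendsto_integral_of_dominated_convergence (fun x => |f x| + 1)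
    (fun k => (u k).aestronglyMeasurable) (hfi.abs.add (integrable_const 1))
    (fun k => .of_forall fun x => ?_) (.of_forall fun x => ?_)⟩
  · have hclamp := abs_le.1 (abs_max_min_le_abs (ha0 k) (hb0 k) (f x))
    have hmesh : 1 / ((k : ℝ) + 1) ≤ 1 := by
      simpa using Nat.one_div_le_one_div (α := ℝ) (Nat.zero_le k)
    rw [Real.norm_eq_abs, abs_le]
    constructor <;> linarith [hu_le k x, hle_u k x]
  · have hclamp := tendsto_max_min ha hb (f x)
    refine tendsto_of_tendsto_of_tendsto_of_le_of_le ?_ hclamp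
      (fun k => sub_le_iff_le_add.2 (hle_u k x)) (fun k => hu_le k x)
    simpa using hclamp.sub (tendsto_one_div_add_atTop_nhds_zero_nat (𝕜 := ℝ))

end SimpleApproximation

section Potentials

variable {ι : Type*} {Ω : ι → Type*}

/-- The direct sum `⊕ᵢ fᵢ : ω ↦ Σᵢ fᵢ(ωᵢ)` of functions of one coordinate each. -/
def tensorSum [Fintype ι] : (∀ i, Ω i → ℝ) →ₗ[ℝ] (∀ i, Ω i) → ℝ where
  toFun f ω := ∑ i, f i (ω i)
  map_add' _ _ := funext fun _ => Finset.sum_add_distrib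
  map_smul' _ _ := funext fun _ => (Finset.mul_sum _ _ _).symm

variable [∀ i, MeasurableSpace (Ω i)] {μ : ∀ i, Measure (Ω i)}

/-- The tuples `(fᵢ)` with `fᵢ ∈ L_1(μᵢ)`, as functions rather than classes modulo `μᵢ`-a.e.
equality, because the constraint `⊕ᵢ fᵢ ≤ c` is imposed everywhere. -/
def potentials (μ : ∀ i, Measure (Ω i)) : Submodule ℝ (∀ i, Ω i → ℝ) where
  carrier := {f | ∀ i, Measurable (f i) ∧ Integrable (f i) (μ i)}
  add_mem' hf hg i := ⟨(hf i).1.add (hg i).1, (hf i).2.add (hg i).2⟩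
  zero_mem' _ := ⟨measurable_zero, integrable_zero _ _ _⟩
  smul_mem' a _ hf i := ⟨(hf i).1.const_smul a, (hf i).2.smul a⟩

/-- The dual objective `(fᵢ) ↦ Σᵢ μᵢ(fᵢ)`. -/
noncomputable def totalIntegral [Fintype ι] (μ : ∀ i, Measure (Ω i)) : potentials μ →ₗ[ℝ] ℝ where
  toFun f := ∑ i, ∫ x, f.1 i x ∂μ i
  map_add' f g := by
    rw [← Finset.sum_add_distrib]
    exact Finset.sum_congr rfl fun i _ => integral_add (f.2 i).2 (g.2 i).2
  map_smul' a f := by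
    rw [RingHom.id_apply, smul_eq_mul, Finset.mul_sum]
    exact Finset.sum_congr rfl fun i _ => integral_const_mul a _

open scoped Classical in
/-- The potential whose only nonzero entry is the simple function `u` at coordinate `i`. -/
noncomputable def coordPotential [∀ i, IsFiniteMeasure (μ i)] (i : ι) (u : SimpleFunc (Ω i) ℝ) :
    potentials μ :=
  ⟨Pi.single i u, fun j => by
    obtain rfl | hij := eq_or_ne j i
    · rw [Pi.single_eq_same]
      exact ⟨u.measurable, u.integrable_of_isFiniteMeasure⟩
    · rw [Pi.single_eq_of_ne hij]
      exact ⟨measurable_zero, integrable_zero _ _ _⟩⟩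

variable [Fintype ι] [∀ i, IsFiniteMeasure (μ i)]

lemma tensorSum_coordPotential (i : ι) (u : SimpleFunc (Ω i) ℝ) (ω : ∀ i, Ω i) :
    tensorSum (coordPotential (μ := μ) i u).1 ω = u (ω i) := by
  classical
  refine (Fintype.sum_eq_single i fun j hj => ?_).trans ?_
  · simp [coordPotential, Pi.single_eq_of_ne hj]
  · simp [coordPotential]

lemma totalIntegral_coordPotential (i : ι) (u : SimpleFunc (Ω i) ℝ) :
    totalIntegral μ (coordPotential i u) = ∫ x, u x ∂μ i := by
  classical
  refine (Fintype.sum_eq_single i fun j hj => ?_).trans ?_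
  · simp [coordPotential, Pi.single_eq_of_ne hj]
  · simp [coordPotential]

end Potentials

section WeakDuality

variable {n : ℕ} {Ω : Fin n → Type*} [∀ i, MeasurableSpace (Ω i)] {μ : ∀ i, Measure (Ω i)}
  [∀ i, IsFiniteMeasure (μ i)] {c : (∀ i, Ω i) → ℝ≥0∞} {Q : MSet (∀ i, Ω i) → unitInterval}

lemma ofReal_sum_integral_simpleFunc_le_fapIntTop (hQ : Q ∈ couplings μ)
    (u : ∀ i, SimpleFunc (Ω i) ℝ) (huc : ∀ ω, ENNReal.ofReal (∑ i, u i (ω i)) ≤ c ω) :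
    ENNReal.ofReal (∑ i, ∫ x, u i x ∂μ i) ≤ fapIntTop Q c := by
  let s : SimpleFunc (∀ i, Ω i) ℝ := ∑ i, (u i).comp (fun ω => ω i) (measurable_pi_apply i)
  have hs : simpleInt Q s = ∑ i, ∫ x, u i x ∂μ i := by
    rw [simpleInt_sum hQ.1]
    exact Finset.sum_congr rfl fun i _ =>
      simpleInt_comp_eq_integral (measurable_pi_apply i) (hQ.2 i) (u i)
  rw [fapIntTop_eq_iSup hQ.1, ← hs]
  refine le_iSup₂_of_le s (fun ω => ?_) le_rfl
  simpa only [s, simpleFunc_sum_apply, SimpleFunc.coe_comp, Function.comp_apply] using huc ω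

lemma ofReal_totalIntegral_le_fapIntTop (hQ : Q ∈ couplings μ) (f : potentials μ)
    (hfc : ∀ ω, ENNReal.ofReal (tensorSum f.1 ω) ≤ c ω) :
    ENNReal.ofReal (totalIntegral μ f) ≤ fapIntTop Q c := by
  have hneg : Tendsto (fun k : ℕ => -((n + 1) * k : ℝ)) atTop atBot :=
    tendsto_neg_atTop_atBot.comp (tendsto_natCast_atTop_atTop.const_mul_atTop (by positivity))
  choose u hu_le hu_tendsto using fun i => exists_simpleFunc_tendsto_integral (f.2 i).1 (f.2 i).2
    (fun k => neg_nonpos.2 (by positivity)) (fun k => k.cast_nonneg) hneg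
    tendsto_natCast_atTop_atTop
  have hlim : Tendsto (fun k => ENNReal.ofReal (∑ i, ∫ x, u i k x ∂μ i)) atTop
      (𝓝 (ENNReal.ofReal (totalIntegral μ f))) :=
    ENNReal.tendsto_ofReal (tendsto_finsetSum _ fun i _ => hu_tendsto i)
  refine le_of_tendsto' hlim fun k =>
    ofReal_sum_integral_simpleFunc_le_fapIntTop hQ (fun i => u i k) fun ω => ?_
  have hcard : Fintype.card (Fin n) * (k : ℝ) ≤ (n + 1) * k := by
    rw [Fintype.card_fin]
    gcongr
    exact le_add_of_nonneg_right zero_le_one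
  have hu_sum : ∑ i, u i k (ω i) ≤ max 0 (tensorSum f.1 ω) :=
    (Finset.sum_le_sum fun i _ => hu_le i k (ω i)).trans
      (sum_max_neg_min_le k.cast_nonneg hcard fun i => f.1 i (ω i))
  calc ENNReal.ofReal (∑ i, u i k (ω i))
      ≤ ENNReal.ofReal (max 0 (tensorSum f.1 ω)) := ENNReal.ofReal_le_ofReal hu_sum
    _ = ENNReal.ofReal (tensorSum f.1 ω) := by rw [ENNReal.ofReal_max, ENNReal.ofReal_zero]; simp
    _ ≤ c ω := hfc ω

end WeakDuality

section StrongDuality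

lemma exists_linearMap_le_of_pointedCone {E : Type*} [AddCommGroup E] [Module ℝ E]
    (K : PointedCone ℝ (E × ℝ)) (hzero : ∀ t, ((0 : E), t) ∈ K → 0 ≤ t)
    (hfiber : ∀ g, ∃ t, (g, t) ∈ K) :
    ∃ φ : E →ₗ[ℝ] ℝ, ∀ g t, (g, t) ∈ K → φ g ≤ t := by
  let vertical : E × ℝ →ₗ.[ℝ] ℝ :=
    (LinearMap.snd ℝ E ℝ).toPMap (LinearMap.range (LinearMap.inr ℝ E ℝ))
  have hvertical : ∀ x : vertical.domain, (x : E × ℝ) ∈ K → 0 ≤ vertical x := by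
    rintro ⟨_, t, rfl⟩ ht
    exact hzero t ht
  have hdense : ∀ y, ∃ x : vertical.domain, (x : E × ℝ) + y ∈ K := by
    rintro ⟨g, r⟩
    obtain ⟨t, ht⟩ := hfiber g
    exact ⟨⟨_, t - r, rfl⟩, by simpa using ht⟩
  obtain ⟨ψ, hψ_eq, hψ_nonneg⟩ := riesz_extension K vertical hvertical hdense
  refine ⟨-ψ ∘ₗ LinearMap.inl ℝ E ℝ, fun g t hgt => ?_⟩
  have hψt : ψ (0, t) = t := hψ_eq ⟨_, t, rfl⟩
  have hsplit : ψ (g, t) = ψ (g, 0) + ψ (0, t) := by rw [← map_add]; simp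
  have hnonneg := hψ_nonneg _ hgt
  simp only [LinearMap.neg_apply, LinearMap.comp_apply, LinearMap.inl_apply]
  linarith

variable {ι : Type*} [Fintype ι] {Ω : ι → Type*} [∀ i, MeasurableSpace (Ω i)]
  {μ : ∀ i, Measure (Ω i)} {c : (∀ i, Ω i) → ℝ≥0∞} {D : ℝ≥0}

/-- The pairs `(g, t)` such that `g ≤ ⊕ᵢ fᵢ + s c` and `t = Σᵢ μᵢ(fᵢ) + s D` for some potentials
`fᵢ` and some `s ≥ 0`. The inequality is written in `[0, ∞]`, with the convention `0 * ∞ = 0`. -/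
def superhedgingCone (μ : ∀ i, Measure (Ω i)) (c : (∀ i, Ω i) → ℝ≥0∞) (D : ℝ≥0) :
    PointedCone ℝ (SimpleFunc (∀ i, Ω i) ℝ × ℝ) where
  carrier := {p | ∃ (f : potentials μ) (s : ℝ≥0),
    (∀ ω, ENNReal.ofReal (p.1 ω - tensorSum f.1 ω) ≤ s * c ω) ∧ p.2 = totalIntegral μ f + s * D}
  zero_mem' := ⟨0, 0, fun ω => by simp, by simp⟩
  add_mem' := by
    rintro ⟨g, _⟩ ⟨g', _⟩ ⟨f, s, hg, rfl⟩ ⟨f', s', hg', rfl⟩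
    refine ⟨f + f', s + s', fun ω => ?_, ?_⟩
    · have hsum : (g + g') ω - tensorSum (f + f').1 ω =
          (g ω - tensorSum f.1 ω) + (g' ω - tensorSum f'.1 ω) := by
        rw [SimpleFunc.add_apply, Submodule.coe_add, map_add, Pi.add_apply]
        ring
      rw [Prod.fst_add, hsum, ENNReal.coe_add, add_mul]
      exact ENNReal.ofReal_add_le.trans (add_le_add (hg ω) (hg' ω))
    · rw [Prod.snd_add, map_add, NNReal.coe_add]
      ring
  smul_mem' := by
    rintro ⟨a, ha⟩ ⟨g, _⟩ ⟨f, s, hg, rfl⟩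
    lift a to ℝ≥0 using ha
    refine ⟨(a : ℝ) • f, a * s, fun ω => ?_, ?_⟩
    · have hmul : ((a : ℝ) • g) ω - tensorSum ((a : ℝ) • f).1 ω =
          a * (g ω - tensorSum f.1 ω) := by
        rw [SimpleFunc.smul_apply, Submodule.coe_smul, map_smul, Pi.smul_apply, smul_eq_mul,
          smul_eq_mul, mul_sub]
      calc ENNReal.ofReal (((a : ℝ) • g) ω - tensorSum ((a : ℝ) • f).1 ω)
          = a * ENNReal.ofReal (g ω - tensorSum f.1 ω) := by
            rw [hmul, ENNReal.ofReal_mul NNReal.zero_le_coe, ENNReal.ofReal_coe_nnreal]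
        _ ≤ a * (s * c ω) := by gcongr; exact hg ω
        _ = ↑(a * s) * c ω := by rw [ENNReal.coe_mul, mul_assoc]
    · change (a : ℝ) * (totalIntegral μ f + s * D) = _
      rw [map_smul, smul_eq_mul, NNReal.coe_mul]
      ring

/-- `D` is an upper bound for the dual problem. The constraint is truncated at `0`, which loses
nothing since `c ≥ 0`. -/
def IsDualBound (μ : ∀ i, Measure (Ω i)) (c : (∀ i, Ω i) → ℝ≥0∞) (D : ℝ≥0) : Prop :=
  ∀ f : potentials μ, (∀ ω, ENNReal.ofReal (tensorSum f.1 ω) ≤ c ω) → totalIntegral μ f ≤ D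

/-- `φ` is bounded above by the superhedging price `g ↦ inf {Σᵢ μᵢ(fᵢ) : g ≤ ⊕ᵢ fᵢ}`, which makes
it a positive functional with marginals `μᵢ`. -/
def IsDominated (φ : SimpleFunc (∀ i, Ω i) ℝ →ₗ[ℝ] ℝ) (μ : ∀ i, Measure (Ω i)) : Prop :=
  ∀ g (f : potentials μ), (∀ ω, g ω ≤ tensorSum f.1 ω) → φ g ≤ totalIntegral μ f

-- For every `r > s` the potentials `-r⁻¹ fᵢ` are dual feasible; the limit `r → s` covers `s = 0`.
lemma nonneg_of_zero_mem_superhedgingCone (hD : IsDualBound μ c D) {t : ℝ}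
    (ht : (0, t) ∈ superhedgingCone μ c D) : 0 ≤ t := by
  obtain ⟨f, s, hf, rfl : t = _⟩ := ht
  have hscaled : ∀ r : ℝ≥0, s < r → -totalIntegral μ f ≤ r * D := by
    intro r hr
    have hr0 : 0 < r := zero_le.trans_lt hr
    have hfeasible : ∀ ω, ENNReal.ofReal (tensorSum (-((r⁻¹ : ℝ≥0) : ℝ) • f).1 ω) ≤ c ω := by
      intro ω
      have hneg : tensorSum (-((r⁻¹ : ℝ≥0) : ℝ) • f).1 ω = (r⁻¹ : ℝ≥0) * (0 - tensorSum f.1 ω) := by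
        rw [Submodule.coe_smul, map_smul, Pi.smul_apply, smul_eq_mul]
        ring
      calc ENNReal.ofReal (tensorSum (-((r⁻¹ : ℝ≥0) : ℝ) • f).1 ω)
          = (r⁻¹ : ℝ≥0) * ENNReal.ofReal (0 - tensorSum f.1 ω) := by
            rw [hneg, ENNReal.ofReal_mul NNReal.zero_le_coe, ENNReal.ofReal_coe_nnreal]
        _ ≤ (r⁻¹ : ℝ≥0) * (r * c ω) := by
            gcongr
            exact (hf ω).trans (by gcongr)
        _ = c ω := by
            rw [← mul_assoc, ← ENNReal.coe_mul, inv_mul_cancel₀ hr0.ne', ENNReal.coe_one, one_mul]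
    have hvalue := hD _ hfeasible
    rwa [map_smul, smul_eq_mul, NNReal.coe_inv, neg_mul, ← mul_neg,
      inv_mul_le_iff₀ (NNReal.coe_pos.2 hr0)] at hvalue
  have hlim : Tendsto (fun r : ℝ≥0 => (r * D : ℝ)) (𝓝[>] s) (𝓝 (s * D)) :=
    (NNReal.continuous_coe.mul_const (D : ℝ)).continuousWithinAt
  have hs : -totalIntegral μ f ≤ s * D :=
    ge_of_tendsto hlim (eventually_mem_nhdsWithin.mono hscaled)
  linarith

lemma exists_functional_le [Nonempty ι] [∀ i, IsFiniteMeasure (μ i)] (hD : IsDualBound μ c D) :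
    ∃ φ : SimpleFunc (∀ i, Ω i) ℝ →ₗ[ℝ] ℝ,
      IsDominated φ μ ∧ ∀ g, (∀ ω, ENNReal.ofReal (g ω) ≤ c ω) → φ g ≤ D := by
  obtain ⟨i⟩ := ‹Nonempty ι›
  have hfiber (g : SimpleFunc (∀ i, Ω i) ℝ) : ∃ t, (g, t) ∈ superhedgingCone μ c D := by
    obtain ⟨C, hC⟩ := g.exists_forall_le
    refine ⟨_, coordPotential i (SimpleFunc.const _ C), 0, fun ω => ?_, rfl⟩
    rw [tensorSum_coordPotential]
    exact (ENNReal.ofReal_of_nonpos (sub_nonpos.2 (hC ω))).trans_le zero_le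
  obtain ⟨φ, hφ⟩ := exists_linearMap_le_of_pointedCone (superhedgingCone μ c D)
    (fun _ => nonneg_of_zero_mem_superhedgingCone hD) hfiber
  refine ⟨φ, fun g f hgf => hφ _ _ ⟨f, 0, fun ω => ?_, by simp⟩,
    fun g hgc => hφ _ _ ⟨0, 1, fun ω => ?_, by simp⟩⟩
  · exact (ENNReal.ofReal_of_nonpos (sub_nonpos.2 (hgf ω))).trans_le zero_le
  · simpa using hgc ω

section Marginals

variable {φ : SimpleFunc (∀ i, Ω i) ℝ →ₗ[ℝ] ℝ}

lemma IsDominated.map_nonneg (hφ : IsDominated φ μ) (g : SimpleFunc (∀ i, Ω i) ℝ)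
    (hg : 0 ≤ g) : 0 ≤ φ g := by
  have hneg := hφ (-g) 0 fun ω => by simpa using hg ω
  rw [map_neg, map_zero] at hneg
  exact neg_nonpos.1 hneg

lemma IsDominated.map_comp_eval [∀ i, IsFiniteMeasure (μ i)]
    (hφ : IsDominated φ μ) (i : ι) (u : SimpleFunc (Ω i) ℝ) :
    φ (u.comp (fun ω => ω i) (measurable_pi_apply i)) = ∫ x, u x ∂μ i := by
  have hle (v : SimpleFunc (Ω i) ℝ) :
      φ (v.comp (fun ω => ω i) (measurable_pi_apply i)) ≤ ∫ x, v x ∂μ i := by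
    rw [← totalIntegral_coordPotential]
    exact hφ _ _ fun ω => (tensorSum_coordPotential i v ω).ge
  have hge : -φ (u.comp (fun ω => ω i) (measurable_pi_apply i)) ≤ -∫ x, u x ∂μ i := by
    rw [← map_neg, ← integral_neg]
    exact hle (-u)
  exact (hle u).antisymm (neg_le_neg_iff.1 hge)

lemma IsDominated.map_restrict_one_preimage_eval [∀ i, IsFiniteMeasure (μ i)]
    (hφ : IsDominated φ μ) (i : ι) {B : Set (Ω i)} (hB : MeasurableSet B) :
    φ ((1 : SimpleFunc (∀ i, Ω i) ℝ).restrict ((fun ω => ω i) ⁻¹' B)) = (μ i).real B := by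
  have hcomp : (1 : SimpleFunc (∀ i, Ω i) ℝ).restrict ((fun ω => ω i) ⁻¹' B) =
      ((1 : SimpleFunc (Ω i) ℝ).restrict B).comp (fun ω => ω i) (measurable_pi_apply i) := by
    apply SimpleFunc.coe_injective
    rw [SimpleFunc.coe_restrict _ (measurable_pi_apply i hB), SimpleFunc.coe_comp,
      SimpleFunc.coe_restrict _ hB]
    rfl
  rw [hcomp, hφ.map_comp_eval, SimpleFunc.coe_restrict _ hB, SimpleFunc.coe_one,
    integral_indicator_one hB]

lemma IsDominated.map_one [Nonempty ι] [∀ i, IsProbabilityMeasure (μ i)]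
    (hφ : IsDominated φ μ) : φ 1 = 1 := by
  obtain ⟨i⟩ := ‹Nonempty ι›
  simpa using hφ.map_restrict_one_preimage_eval i MeasurableSet.univ

end Marginals

lemma exists_coupling_fapIntTop_le {n : ℕ} [NeZero n] {Ω : Fin n → Type*}
    [∀ i, MeasurableSpace (Ω i)] {μ : ∀ i, Measure (Ω i)} [∀ i, IsProbabilityMeasure (μ i)]
    {c : (∀ i, Ω i) → ℝ≥0∞} {D : ℝ≥0} (hD : IsDualBound μ c D) :
    ∃ Q ∈ couplings μ, fapIntTop Q c ≤ D := by
  obtain ⟨φ, hφ, hφc⟩ := exists_functional_le hD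
  have hpos := hφ.map_nonneg
  have hone := hφ.map_one
  have hFAP := isFAP_fapOfFunctional hpos hone
  refine ⟨fapOfFunctional φ hpos hone,
    ⟨hFAP, fun i _ hB => hφ.map_restrict_one_preimage_eval i hB⟩, ?_⟩
  rw [fapIntTop_eq_iSup hFAP]
  refine iSup₂_le fun s hs => ?_
  rw [simpleInt_fapOfFunctional]
  exact ENNReal.ofReal_le_of_le_toReal (hφc s hs)

end StrongDuality

lemma ofReal_le_iff_le_toReal_or_eq_top {a : ℝ} {b : ℝ≥0∞} :
    ENNReal.ofReal a ≤ b ↔ a ≤ b.toReal ∨ b = ⊤ := by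
  obtain rfl | hb := eq_or_ne b ⊤
  · simp
  · simp only [ENNReal.ofReal_le_iff_le_toReal hb, hb, or_false]

/-- For a non-measurable `c`, `fapIntTop Q c` is the lower integral of `c`. -/
theorem duality_couplings_general
    {n : ℕ} (hn : 0 < n) {Ω : Fin n → Type*} [∀ i, MeasurableSpace (Ω i)]
    (μ : ∀ i, Measure (Ω i)) [∀ i, IsProbabilityMeasure (μ i)]
    (c : (∀ i, Ω i) → ℝ≥0∞) :
    (⨅ Q ∈ couplings μ, fapIntTop Q c) =
      ⨆ (f : ∀ i, Ω i → ℝ)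
        (_ : (∀ i, Measurable (f i) ∧ Integrable (f i) (μ i)) ∧
          ∀ ω : ∀ i, Ω i, (∑ i, f i (ω i)) ≤ (c ω).toReal ∨ c ω = ⊤),
        ENNReal.ofReal (∑ i, ∫ x, f i x ∂(μ i)) := by
  have : NeZero n := .of_pos hn
  simp only [← ofReal_le_iff_le_toReal_or_eq_top]
  apply le_antisymm
  · refine le_of_forall_ge fun D hD => ?_
    induction D with
    | top => exact le_top
    | coe D =>
      have hbound : IsDualBound μ c D := fun f hf =>
        (ENNReal.ofReal_le_iff_le_toReal coe_ne_top).1 (iSup₂_le_iff.1 hD f.1 ⟨f.2, hf⟩)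
      obtain ⟨Q, hQ, hQD⟩ := exists_coupling_fapIntTop_le hbound
      exact (iInf₂_le Q hQ).trans hQD
  · exact iSup₂_le fun f hf => le_iInf₂ fun Q hQ =>
      ofReal_totalIntegral_le_fapIntTop hQ ⟨f, hf.1⟩ hf.2

/-- duality over finitely additive couplings:
`inf_{Q ∈ M} Q(c) = sup { Σᵢ μᵢ(fᵢ) : fᵢ ∈ L¹(μᵢ), ⊕ᵢ fᵢ ≤ c }`.
The pointwise constraint `Σᵢ fᵢ(ωᵢ) ≤ c(ω)` (with `c` `[0,∞]`-valued) is expressed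
as `Σᵢ fᵢ(ωᵢ) ≤ (c ω).toReal ∨ c ω = ∞`, which is equivalent; since the zero tuple
is admissible the supremum is `≥ 0`, so taking it in `[0,∞]` via `ENNReal.ofReal`
is also equivalent. -/
theorem duality_couplings
    {n : ℕ} (hn : 0 < n) {Ω : Fin n → Type*} [∀ i, MeasurableSpace (Ω i)]
    (μ : ∀ i, Measure (Ω i)) [∀ i, IsProbabilityMeasure (μ i)]
    (c : (∀ i, Ω i) → ℝ≥0∞) (hc : Measurable c) :
    (⨅ Q ∈ couplings μ, fapIntTop Q c) =
      ⨆ (f : ∀ i, Ω i → ℝ)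
        (_ : (∀ i, Measurable (f i) ∧ Integrable (f i) (μ i)) ∧
          ∀ ω : ∀ i, Ω i, (∑ i, f i (ω i)) ≤ (c ω).toReal ∨ c ω = ⊤),
        ENNReal.ofReal (∑ i, ∫ x, f i x ∂(μ i)) :=
  duality_couplings_general hn μ c

end FATransport
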